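/- Let (X,d) be a compact metric space, f: X → X a continuous map, and K ⊆ M_f(X) a closed subset. Let G^K = {x ∈ X : V_f(x) ∩ K ≠ ∅}. Then for every ε > 0, h_top^B(G^K,f,ε) ≤ sup_{μ∈K} inf_{ξ: diam ξ < ε} h_μ(f,ξ), where the infimum is over all finite measurable partitions ξ of X with diam ξ < ε. -/

import Mathlib

open MeasureTheory Filter Set Topology
open scoped ENNReal NNReal

noncomputable section

namespace MMD

variable {X : Type*}

/-! ### Bowen balls, Bowen topological entropy and metric mean dimension -/

/-- The Bowen ball `B_n(x,ε) = {y | d_n(x,y) < ε}` where `d_n` is the Bowen metric. -/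
def bowenBall [PseudoMetricSpace X] (f : X → X) (x : X) (n : ℕ) (ε : ℝ) : Set X :=
  {y | ∀ i < n, dist (f^[i] x) (f^[i] y) < ε}

/-- The weight sum `Σ_{(x,n) ∈ C} exp (-s n)` of a (countable) collection of Bowen balls,
encoded by its set of centers/lengths. -/
def coverSum (s : ℝ) (C : Set (X × ℕ)) : ℝ≥0∞ :=
  ∑' p : C, ENNReal.ofReal (Real.exp (-s * ((p : X × ℕ).2 : ℝ)))

/-- `m(Z,s,N,ε,f)`: infimum over countable (or finite) covers of `Z` by Bowen balls
`B_{n_i}(x_i,ε)` with `n_i ≥ N` of `Σ exp (-s n_i)`. -/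
def mB [PseudoMetricSpace X] (f : X → X) (Z : Set X) (s : ℝ) (N : ℕ) (ε : ℝ) : ℝ≥0∞ :=
  ⨅ (C : Set (X × ℕ)) (_ : C.Countable) (_ : ∀ p ∈ C, N ≤ p.2)
    (_ : Z ⊆ ⋃ p ∈ C, bowenBall f p.1 p.2 ε), coverSum s C

/-- `m(Z,s,ε) = lim_{N→∞} m(Z,s,N,ε,f)`; the limit of this monotone quantity is the sup. -/
def mBLim [PseudoMetricSpace X] (f : X → X) (Z : Set X) (s : ℝ) (ε : ℝ) : ℝ≥0∞ :=
  ⨆ N : ℕ, mB f Z s N ε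

/-- The Bowen topological entropy of `Z` at scale `ε`:
`h_top^B(Z,f,ε) = inf {s | m(Z,s,ε) = 0}`. -/
def hB [PseudoMetricSpace X] (f : X → X) (Z : Set X) (ε : ℝ) : ℝ :=
  sInf {s : ℝ | mBLim f Z s ε = 0}

/-- Upper Bowen metric mean dimension of `Z`. -/
def mdimUpper [PseudoMetricSpace X] (f : X → X) (Z : Set X) : ℝ :=
  limsup (fun ε : ℝ => hB f Z ε / |Real.log ε|) (𝓝[>] (0:ℝ))

/-- Lower Bowen metric mean dimension of `Z`. -/
def mdimLower [PseudoMetricSpace X] (f : X → X) (Z : Set X) : ℝ :=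
  liminf (fun ε : ℝ => hB f Z ε / |Real.log ε|) (𝓝[>] (0:ℝ))

/-! ### Finite measurable partitions and measure-theoretic entropy -/

/-- `P` is a finite measurable partition of `X` (mod `μ`): its elements are measurable,
they cover `X` up to a `μ`-null set, and they pairwise intersect in `μ`-null sets. -/
def IsPartition [MeasurableSpace X] (μ : Measure X) (P : Finset (Set X)) : Prop :=
  (∀ A ∈ P, MeasurableSet A) ∧ μ (Set.univ \ ⋃ A ∈ P, A) = 0 ∧
    ∀ A ∈ P, ∀ B ∈ P, A ≠ B → μ (A ∩ B) = 0

/-- Static entropy `H_μ(P) = -Σ_{A∈P} μ(A) log μ(A)`. -/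
def partEnt [MeasurableSpace X] (μ : Measure X) (P : Finset (Set X)) : ℝ :=
  ∑ A ∈ P, Real.negMulLog ((μ A).toReal)

/-- Join (common refinement) of two finite families of sets. -/
def joinParts (P Q : Finset (Set X)) : Finset (Set X) :=
  letI := Classical.decEq (Set X)
  (P ×ˢ Q).image fun p => p.1 ∩ p.2

/-- `dynJoin f P n = ⋁_{j=0}^{n-1} f^{-j} P`. -/
def dynJoin (f : X → X) (P : Finset (Set X)) : ℕ → Finset (Set X)
  | 0 => {Set.univ}
  | n + 1 =>
      letI := Classical.decEq (Set X)
      joinParts P ((dynJoin f P n).image fun A => f ⁻¹' A)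

/-- Measure-theoretic entropy of `f` w.r.t. the partition `P`:
`h_μ(f,P) = lim_n (1/n) H_μ(⋁_{j<n} f^{-j}P)` (the limit exists, hence equals the `limsup`). -/
def dynEnt [MeasurableSpace X] (μ : Measure X) (f : X → X) (P : Finset (Set X)) : ℝ :=
  limsup (fun n : ℕ => partEnt μ (dynJoin f P n) / n) atTop

/-- `diam P < ε`, i.e. every element of `P` has diameter `< ε`. -/
def partDiamLt [PseudoMetricSpace X] (P : Finset (Set X)) (ε : ℝ) : Prop :=
  ∀ A ∈ P, Metric.diam A < ε

/-- `inf_{ξ : diam ξ < ε} h_μ(f,ξ)`, the infimum over all finite measurable partitions of `X`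
with diameter `< ε`. -/
def infEnt [PseudoMetricSpace X] [MeasurableSpace X] (μ : Measure X) (f : X → X) (ε : ℝ) : ℝ :=
  sInf (dynEnt μ f '' {P : Finset (Set X) | IsPartition μ P ∧ partDiamLt P ε})

/-! ### Empirical measures, generic points and saturated sets -/

/-- The `n`-th empirical measure `E_n(x) = (1/n) Σ_{j<n} δ_{f^j x}` (defined as `E_1(x)`
for `n = 0`, a junk value). -/
def empMeasure [MeasurableSpace X] (f : X → X) (x : X) (n : ℕ) : Measure X :=
  ((max n 1 : ℕ) : ℝ≥0∞)⁻¹ • ∑ j ∈ Finset.range (max n 1), Measure.dirac (f^[j] x)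

instance [MeasurableSpace X] (f : X → X) (x : X) (n : ℕ) :
    IsProbabilityMeasure (empMeasure f x n) := by
  constructor
  have h1 : (0:ℕ) < max n 1 := lt_of_lt_of_le one_pos (le_max_right n 1)
  have hsum : (∑ j ∈ Finset.range (max n 1), Measure.dirac (f^[j] x)) Set.univ
      = ((max n 1 : ℕ) : ℝ≥0∞) := by
    rw [Measure.finset_sum_apply]
    simp
  simp only [empMeasure, Measure.smul_apply, smul_eq_mul, hsum]
  exact ENNReal.inv_mul_cancel (by exact_mod_cast h1.ne') (by simp)

/-- The `n`-th empirical measure as a probability measure. -/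
def empProb [MeasurableSpace X] (f : X → X) (x : X) (n : ℕ) : ProbabilityMeasure X :=
  ⟨empMeasure f x n, inferInstance⟩

/-- `V_f(x)`: the set of weak* limit points of the sequence of empirical measures of `x`. -/
def Vf [MetricSpace X] [MeasurableSpace X] [BorelSpace X] (f : X → X) (x : X) :
    Set (ProbabilityMeasure X) :=
  {ν | MapClusterPt ν atTop (empProb f x)}

/-- The saturated set `G_K = {x | V_f(x) = K}`. -/
def GK [MetricSpace X] [MeasurableSpace X] [BorelSpace X] (f : X → X)
    (K : Set (ProbabilityMeasure X)) : Set X :=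
  {x | Vf f x = K}

/-- The generic set `G_μ = {x | V_f(x) = {μ}}`. -/
def genSet [MetricSpace X] [MeasurableSpace X] [BorelSpace X] (f : X → X)
    (μ : ProbabilityMeasure X) : Set X :=
  GK f {μ}

/-! ### Invariant measures, supports, measure center, omega-limit sets -/

/-- `μ` is an `f`-invariant (Borel probability) measure. -/
def InvariantProb [MeasurableSpace X] (f : X → X) (μ : ProbabilityMeasure X) : Prop :=
  Measure.map f (μ : Measure X) = (μ : Measure X)

/-- The set `M_f(X)` of invariant probability measures. -/
def invSet [MeasurableSpace X] (f : X → X) : Set (ProbabilityMeasure X) :=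
  {μ | InvariantProb f μ}

/-- The support of a measure: points all of whose neighborhoods have positive measure. -/
def measSupport [TopologicalSpace X] [MeasurableSpace X] (μ : Measure X) : Set X :=
  {x | ∀ U ∈ 𝓝 x, 0 < μ U}

/-- The measure center `C_f(X) = closure (⋃_{μ ∈ M_f(X)} S_μ)`. -/
def measCenter [TopologicalSpace X] [MeasurableSpace X] (f : X → X) : Set X :=
  closure (⋃ μ ∈ invSet f, measSupport (μ : Measure X))

/-- The omega-limit set `ω_f(x) = ⋂_n closure {f^k x : k ≥ n}`. -/
def omegaSet [TopologicalSpace X] (f : X → X) (x : X) : Set X :=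
  ⋂ n : ℕ, closure {y | ∃ k, n ≤ k ∧ f^[k] x = y}

/-- The set of points whose omega-limit set contains the measure center. -/
def CtrSet [TopologicalSpace X] [MeasurableSpace X] (f : X → X) : Set X :=
  {x | measCenter f ⊆ omegaSet f x}

/-! ### Blow-up functions and the g-almost product property -/

/-- A blowup function: nondecreasing, unbounded, `g n < n` and `g n / n → 0`. -/
structure IsBlowup (g : ℕ → ℕ) : Prop where
  mono : Monotone g
  unbounded : ∀ C : ℕ, ∃ n, C < g n
  lt_self : ∀ n, 0 < n → g n < n
  ratio_tendsto_zero : Tendsto (fun n : ℕ => (g n : ℝ) / n) atTop (𝓝 0)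

/-- The g-blowup `B_n(g;x,ε)` of the Bowen ball `B_n(x,ε)`. -/
def blowupBall [PseudoMetricSpace X] (f : X → X) (g : ℕ → ℕ) (x : X) (n : ℕ) (ε : ℝ) :
    Set X :=
  {y | ∃ Λ : Finset ℕ, Λ ⊆ Finset.range n ∧
    letI := Classical.decEq ℕ
    (Finset.range n \ Λ).card ≤ g n ∧ ∀ j ∈ Λ, dist (f^[j] x) (f^[j] y) ≤ ε}

/-- The g-almost product property. -/
def GAlmostProduct [PseudoMetricSpace X] (f : X → X) (g : ℕ → ℕ) : Prop :=
  ∃ m : ℝ → ℕ, (∀ s t : ℝ, 0 < s → s ≤ t → m t ≤ m s) ∧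
    ∀ (k : ℕ) (x : ℕ → X) (ε : ℕ → ℝ) (n : ℕ → ℕ),
      (∀ j < k, 0 < ε j) → (∀ j < k, m (ε j) ≤ n j) →
      (⋂ j ∈ Finset.range k,
        (f^[∑ i ∈ Finset.range j, n i] ⁻¹' blowupBall f g (x j) (n j) (ε j))).Nonempty

/-! ### Separated sets and Pfister–Sullivan quantities -/

/-- The number of times `0 ≤ j < n` at which the orbits of `x` and `y` are `ε`-apart. -/
def sepCount [PseudoMetricSpace X] (f : X → X) (x y : X) (n : ℕ) (ε : ℝ) : ℕ :=
  letI := Classical.decPred fun j : ℕ => ε < dist (f^[j] x) (f^[j] y)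
  ((Finset.range n).filter fun j => ε < dist (f^[j] x) (f^[j] y)).card

/-- `N(F; δ, n, ε)`: maximal cardinality of a `(δ,n,ε)`-separated subset of
`X_{n,F} = {x | E_n(x) ∈ F}`. -/
def NsepD [MetricSpace X] [MeasurableSpace X] [BorelSpace X] (f : X → X)
    (F : Set (ProbabilityMeasure X)) (δ : ℝ) (n : ℕ) (ε : ℝ) : ℕ :=
  sSup {c : ℕ | ∃ E : Finset X, (↑E : Set X) ⊆ {x | empProb f x n ∈ F} ∧
    (∀ x ∈ E, ∀ y ∈ E, x ≠ y → δ * n ≤ (sepCount f x y n ε : ℝ)) ∧ E.card = c}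

/-- `N(F; n, ε)`: maximal cardinality of an `(n,ε)`-separated subset of `X_{n,F}`. -/
def NsepP [MetricSpace X] [MeasurableSpace X] [BorelSpace X] (f : X → X)
    (F : Set (ProbabilityMeasure X)) (n : ℕ) (ε : ℝ) : ℕ :=
  sSup {c : ℕ | ∃ E : Finset X, (↑E : Set X) ⊆ {x | empProb f x n ∈ F} ∧
    (∀ x ∈ E, ∀ y ∈ E, x ≠ y → ∃ i < n, ε < dist (f^[i] x) (f^[i] y)) ∧ E.card = c}

/-- `PS-bar(μ,δ,ε) = inf_{F ∋ μ} limsup_n (1/n) ln N(F;δ,n,ε)`. -/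
def PSbar [MetricSpace X] [MeasurableSpace X] [BorelSpace X] (f : X → X)
    (μ : ProbabilityMeasure X) (δ ε : ℝ) : ℝ :=
  sInf ((fun F => limsup (fun n : ℕ => Real.log (NsepD f F δ n ε) / n) atTop) ''
    {F : Set (ProbabilityMeasure X) | F ∈ 𝓝 μ})

/-! ### Convex combinations of probability measures -/

/-- The convex hull `cov{μ_1,…,μ_m}` of finitely many probability measures. -/
def convexCombos [MeasurableSpace X] {m : ℕ} (μ : Fin m → ProbabilityMeasure X) :
    Set (ProbabilityMeasure X) :=
  {ν | ∃ t : Fin m → ℝ≥0∞, (∑ i, t i) = 1 ∧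
    (ν : Measure X) = ∑ i, t i • (μ i : Measure X)}

/-- The convex combination `θ μ + (1-θ) ν` of two probability measures (with `θ`
clamped into `[0,1]`). -/
def mixP [MeasurableSpace X] (μ ν : ProbabilityMeasure X) (θ : ℝ) : ProbabilityMeasure X :=
  ⟨ENNReal.ofReal (min (max θ 0) 1) • (μ : Measure X)
      + ENNReal.ofReal (1 - min (max θ 0) 1) • (ν : Measure X), by
    constructor
    set t := min (max θ 0) 1 with ht
    have h0 : 0 ≤ t := le_min (le_max_right θ 0) zero_le_one
    have h1 : t ≤ 1 := min_le_right _ _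
    rw [Measure.add_apply, Measure.smul_apply, Measure.smul_apply, measure_univ, measure_univ,
      smul_eq_mul, smul_eq_mul, mul_one, mul_one, ← ENNReal.ofReal_add h0 (by linarith)]
    have : t + (1 - t) = 1 := by ring
    rw [this, ENNReal.ofReal_one]⟩

/-- Condition A.3: for invariant `μ, ν` with `α μ ≠ α ν`, the map
`θ ↦ α(θμ + (1-θ)ν)` is not constant on any nondegenerate subinterval of `[0,1]`. -/
def CondA3 [MeasurableSpace X] (f : X → X) (α : ProbabilityMeasure X → ℝ) : Prop :=
  ∀ μ ∈ invSet f, ∀ ν ∈ invSet f, α μ ≠ α ν →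
    ∀ a b : ℝ, 0 ≤ a → a < b → b ≤ 1 →
      ¬ (∀ s ∈ Set.Icc a b, ∀ t ∈ Set.Icc a b, α (mixP μ ν s) = α (mixP μ ν t))

end MMD

end

open MMD MeasureTheory Filter Set Topology
open scoped ENNReal NNReal

noncomputable section
namespace MMDProof

universe u

/-- Cylinder sets indexed by words in the elements of `P`. -/
def cyl {X : Type u} (f : X → X) (P : Finset (Set X)) (n : ℕ) (w : Fin n → P) : Set X :=
  {x | ∀ j : Fin n, f^[(j : ℕ)] x ∈ (w j : Set X)}

lemma cyl_cons {X : Type u} (f : X → X) (P : Finset (Set X)) (n : ℕ) (a : P) (w : Fin n → P) :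
    cyl f P (n + 1) (Fin.cons a w) = (a : Set X) ∩ f ⁻¹' (cyl f P n w) := by
  ext x
  simp only [cyl, mem_setOf_eq, Fin.forall_fin_succ, mem_inter_iff, mem_preimage]
  simp [Function.iterate_succ_apply]

lemma dynJoin_eq {X : Type u} (f : X → X) (P : Finset (Set X)) (n : ℕ) :
    letI := Classical.decEq (Set X)
    dynJoin f P n = (Finset.univ : Finset (Fin n → P)).image (cyl f P n) := by
  letI := Classical.decEq (Set X)
  induction n with
  | zero =>
    ext A
    simp only [dynJoin, Finset.mem_singleton, Finset.mem_image, Finset.mem_univ, true_and]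
    constructor
    · rintro rfl
      refine ⟨fun j => j.elim0, ?_⟩
      ext x; simp [cyl]
    · rintro ⟨w, rfl⟩
      ext x; simp [cyl]
  | succ n ih =>
    ext A
    simp only [dynJoin, joinParts, Finset.mem_image, Finset.mem_product, ih, Finset.mem_univ,
      true_and, Prod.exists]
    constructor
    · rintro ⟨a, b, ⟨ha, c, ⟨w, rfl⟩, rfl⟩, rfl⟩
      exact ⟨Fin.cons ⟨a, ha⟩ w, cyl_cons f P n ⟨a, ha⟩ w⟩
    · rintro ⟨w, rfl⟩
      refine ⟨w 0, _, ⟨(w 0).2, _, ⟨Fin.tail w, rfl⟩, rfl⟩, ?_⟩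
      rw [← cyl_cons, Fin.cons_self_tail]

section
variable {X : Type u} [MeasurableSpace X] {μ : Measure X} [IsProbabilityMeasure μ] {f : X → X}
  {P : Finset (Set X)}

lemma cyl_measurable (hf : Measurable f) (hP : IsPartition μ P) (n : ℕ) (w : Fin n → P) :
    MeasurableSet (cyl f P n w) := by
  have : cyl f P n w = ⋂ j : Fin n, f^[(j : ℕ)] ⁻¹' (w j : Set X) := by
    ext x; simp [cyl]
  rw [this]
  exact MeasurableSet.iInter fun j => (hf.iterate _) (hP.1 _ (w j).2)

lemma cyl_inter_null (hf : MeasurePreserving f μ μ) (hP : IsPartition μ P) (n : ℕ)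
    (w v : Fin n → P) (h : w ≠ v) : μ (cyl f P n w ∩ cyl f P n v) = 0 := by
  obtain ⟨j, hj⟩ := Function.ne_iff.1 h
  have h1 : cyl f P n w ∩ cyl f P n v ⊆ f^[(j : ℕ)] ⁻¹' ((w j : Set X) ∩ (v j : Set X)) :=
    fun x hx => ⟨hx.1 j, hx.2 j⟩
  refine measure_mono_null h1 ?_
  rw [(hf.iterate j).measure_preimage
    ((hP.1 _ (w j).2).inter (hP.1 _ (v j).2)).nullMeasurableSet]
  exact hP.2.2 _ (w j).2 _ (v j).2 (fun h => hj (Subtype.ext h))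

lemma sum_cyl_le_one (hf : MeasurePreserving f μ μ) (hP : IsPartition μ P) (n : ℕ) :
    ∑ w : Fin n → P, (μ (cyl f P n w)).toReal ≤ 1 := by
  have h := sum_measure_le_measure_univ (μ := μ) (s := (Finset.univ : Finset (Fin n → P)))
    (t := cyl f P n) (fun w _ => (cyl_measurable hf.measurable hP n w).nullMeasurableSet)
    (fun w _ v _ hwv => cyl_inter_null hf hP n w v hwv)
  rw [measure_univ] at h
  rw [← ENNReal.toReal_sum (fun _ _ => measure_ne_top _ _)]
  exact ENNReal.toReal_le_of_le_ofReal zero_le_one (by simpa using h)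

lemma partEnt_dynJoin (hf : MeasurePreserving f μ μ) (hP : IsPartition μ P) (n : ℕ) :
    partEnt μ (dynJoin f P n) =
      ∑ w : Fin n → P, Real.negMulLog ((μ (cyl f P n w)).toReal) := by
  classical
  unfold partEnt
  rw [dynJoin_eq]
  convert Finset.sum_image_of_pairwise_eq_zero (f := cyl f P n)
    (g := fun A => Real.negMulLog ((μ A).toReal)) (I := Finset.univ) ?_
  intro w _ v _ hwv h
  have := cyl_inter_null hf hP n w v hwv
  rw [← h, inter_self] at this
  simp [this]

lemma partEnt_nonneg (Q : Finset (Set X)) : 0 ≤ partEnt μ Q := by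
  refine Finset.sum_nonneg fun A _ => Real.negMulLog_nonneg ENNReal.toReal_nonneg ?_
  exact ENNReal.toReal_le_of_le_ofReal zero_le_one (by simpa using prob_le_one)

lemma negMulLog_le_aux (p a : ℝ) (hp : 0 ≤ p) (ha : 0 < a) :
    Real.negMulLog p ≤ p * Real.log a + 1 / a := by
  rcases hp.eq_or_lt with rfl | hp
  · simp; positivity
  · have h1 : Real.log (1 / (p * a)) ≤ 1 / (p * a) - 1 := Real.log_le_sub_one_of_pos (by positivity)
    rw [one_div, Real.log_inv, Real.log_mul hp.ne' ha.ne'] at h1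
    have h2 := mul_le_mul_of_nonneg_left h1 hp.le
    have h3 : p * ((p * a)⁻¹ - 1) = 1 / a - p := by field_simp
    rw [h3] at h2
    unfold Real.negMulLog
    nlinarith

lemma partEnt_le (hf : MeasurePreserving f μ μ) (hP : IsPartition μ P) (n : ℕ) :
    partEnt μ (dynJoin f P n) ≤ n * Real.log (P.card + 1) + 1 := by
  rw [partEnt_dynJoin hf hP]
  have ha : (0 : ℝ) < ((P.card : ℝ) + 1) ^ n := by positivity
  calc ∑ w : Fin n → P, Real.negMulLog ((μ (cyl f P n w)).toReal)
      ≤ ∑ w : Fin n → P, ((μ (cyl f P n w)).toReal * Real.log (((P.card : ℝ) + 1) ^ n)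
          + 1 / ((P.card : ℝ) + 1) ^ n) :=
        Finset.sum_le_sum fun w _ => negMulLog_le_aux _ _ ENNReal.toReal_nonneg ha
    _ = (∑ w : Fin n → P, (μ (cyl f P n w)).toReal) * Real.log (((P.card : ℝ) + 1) ^ n)
          + (P.card : ℝ) ^ n * (1 / ((P.card : ℝ) + 1) ^ n) := by
        rw [Finset.sum_add_distrib, Finset.sum_mul]; simp
    _ ≤ 1 * Real.log (((P.card : ℝ) + 1) ^ n) + 1 := by
        have hl : 0 ≤ Real.log (((P.card : ℝ) + 1) ^ n) :=
          Real.log_nonneg (one_le_pow₀ (by linarith [Nat.cast_nonneg (α := ℝ) P.card]))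
        refine add_le_add (mul_le_mul_of_nonneg_right (sum_cyl_le_one hf hP n) hl) ?_
        rw [mul_one_div, div_le_one ha]
        exact pow_le_pow_left₀ (Nat.cast_nonneg _) (by linarith) n
    _ = _ := by rw [Real.log_pow]; ring

lemma partEnt_div_le (hf : MeasurePreserving f μ μ) (hP : IsPartition μ P) (n : ℕ) :
    partEnt μ (dynJoin f P n) / n ≤ Real.log (P.card + 1) + 1 := by
  have hl : 0 ≤ Real.log ((P.card : ℝ) + 1) :=
    Real.log_nonneg (by linarith [Nat.cast_nonneg (α := ℝ) P.card])
  rcases Nat.eq_zero_or_pos n with rfl | hn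
  · simp; linarith
  · have hn' : (1 : ℝ) ≤ n := by exact_mod_cast hn
    rw [div_le_iff₀ (by linarith)]
    have := partEnt_le hf hP n
    nlinarith

lemma partEnt_bdd (hf : MeasurePreserving f μ μ) (hP : IsPartition μ P) :
    IsBoundedUnder (· ≤ ·) atTop (fun n : ℕ => partEnt μ (dynJoin f P n) / n) :=
  isBoundedUnder_of ⟨_, partEnt_div_le hf hP⟩

lemma partEnt_cobdd : 
    IsCoboundedUnder (· ≤ ·) atTop (fun n : ℕ => partEnt μ (dynJoin f P n) / n) :=
  (isBoundedUnder_of ⟨0, fun n => div_nonneg (partEnt_nonneg _) (Nat.cast_nonneg _)⟩ :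
    IsBoundedUnder (· ≥ ·) atTop _).isCoboundedUnder_le

lemma dynEnt_nonneg (hf : MeasurePreserving f μ μ) (hP : IsPartition μ P) :
    0 ≤ dynEnt μ f P :=
  le_limsup_of_frequently_le
    (Frequently.of_forall fun n => div_nonneg (partEnt_nonneg _) (Nat.cast_nonneg _))
    (partEnt_bdd hf hP)

lemma dynEnt_le (hf : MeasurePreserving f μ μ) (hP : IsPartition μ P) :
    dynEnt μ f P ≤ Real.log (P.card + 1) + 1 :=
  limsup_le_of_le partEnt_cobdd (Eventually.of_forall (partEnt_div_le hf hP))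

lemma exists_partEnt_lt (hf : MeasurePreserving f μ μ) (hP : IsPartition μ P) {s : ℝ}
    (h : dynEnt μ f P < s) : ∃ n : ℕ, 0 < n ∧ partEnt μ (dynJoin f P n) < n * s := by
  have h1 := eventually_lt_of_limsup_lt h (partEnt_bdd hf hP)
  obtain ⟨n, hn, hn0⟩ := (h1.and (eventually_gt_atTop 0)).exists
  refine ⟨n, hn0, ?_⟩
  have : (0 : ℝ) < n := by exact_mod_cast hn0
  rwa [div_lt_iff₀ this, mul_comm] at hn
end

/-- A finite partition of small diameter. -/
lemma exists_partition {X : Type u} [MetricSpace X] [CompactSpace X] [MeasurableSpace X]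
    [BorelSpace X] {ε : ℝ} (hε : 0 < ε) : ∃ P : Finset (Set X), partDiamLt P ε ∧
      ∀ μ : Measure X, IsPartition μ P := by
  classical
  obtain ⟨t, ht, hcov⟩ := Metric.totallyBounded_iff.1 (isCompact_univ (X := X)).totallyBounded
    (ε / 3) (by linarith)
  lift t to Finset X using ht
  let atom : Finset X → Set X := fun S => {x | ∀ y ∈ t, dist x y < ε / 3 ↔ y ∈ S}
  refine ⟨t.powerset.image atom, ?_, fun μ => ⟨?_, ?_, ?_⟩⟩
  · intro A hA
    obtain ⟨S, hS, rfl⟩ := Finset.mem_image.1 hA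
    rw [Finset.mem_powerset] at hS
    rcases S.eq_empty_or_nonempty with rfl | ⟨y, hy⟩
    · have : atom ∅ = ∅ := by
        ext x
        have := hcov (mem_univ x)
        simp only [mem_iUnion, Metric.mem_ball] at this
        obtain ⟨y, hy, hxy⟩ := this
        simp only [atom, mem_setOf_eq, mem_empty_iff_false, iff_false]
        intro h
        simpa using (h y hy).1 hxy
      rw [this]; simpa using hε
    · have : atom S ⊆ Metric.ball y (ε / 3) := fun x hx => (hx y (hS hy)).2 hy
      have := (Metric.diam_mono this Metric.isBounded_ball).trans
        (Metric.diam_ball (by linarith : 0 ≤ ε / 3))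
      linarith
  · intro A hA
    obtain ⟨S, hS, rfl⟩ := Finset.mem_image.1 hA
    have : atom S = ⋂ y ∈ t, {x | dist x y < ε / 3 ↔ y ∈ S} := by ext x; simp [atom]
    rw [this]
    refine Finset.measurableSet_biInter _ fun y _ => ?_
    by_cases h : y ∈ S
    · simp only [h, iff_true]
      exact (isOpen_lt (by fun_prop) (by fun_prop)).measurableSet
    · simp only [h, iff_false, not_lt]
      exact (isClosed_le (by fun_prop) (by fun_prop)).measurableSet
  · have : (univ \ ⋃ A ∈ t.powerset.image atom, A) = (∅ : Set X) := by
      ext x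
      simp only [mem_diff, mem_univ, true_and, mem_empty_iff_false, iff_false, not_not, mem_iUnion]
      refine ⟨_, Finset.mem_image.2 ⟨t.filter (fun y => dist x y < ε / 3), by simp, rfl⟩, ?_⟩
      intro y hy
      simp [hy]
    rw [this]; simp
  · intro A hA B hB hAB
    obtain ⟨S, hS, rfl⟩ := Finset.mem_image.1 hA
    obtain ⟨T, hT, rfl⟩ := Finset.mem_image.1 hB
    rw [Finset.mem_powerset] at hS hT
    have : atom S ∩ atom T = ∅ := by
      ext x
      simp only [mem_inter_iff, mem_empty_iff_false, iff_false]
      rintro ⟨h1, h2⟩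
      apply hAB
      congr 1
      ext y
      constructor
      · intro h; exact (h2 y (hS h)).1 ((h1 y (hS h)).2 h)
      · intro h; exact (h1 y (hT h)).1 ((h2 y (hT h)).2 h)
    rw [this]; simp

lemma sum_blocks (g : ℕ → ℝ) (n m : ℕ) :
    ∑ r ∈ Finset.range n, ∑ i ∈ Finset.range m, g (r + i * n) =
      ∑ j ∈ Finset.range (m * n), g j := by
  induction m with
  | zero => simp
  | succ m ih =>
    rw [Nat.succ_mul, Finset.sum_range_add, ← ih]
    simp only [Finset.sum_range_succ, Finset.sum_add_distrib]
    congr 1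
    exact Finset.sum_congr rfl fun r _ => by rw [add_comm]

lemma count_words {V : Type u} [Fintype V] (c : V → ℝ) (θ : ℝ)
    (hcs : ∑ w, Real.exp (-c w) ≤ Real.exp θ) (m : ℕ) (a : ℝ) [DecidableEq V] :
    (((Finset.univ : Finset (Fin m → V)).filter (fun b => ∑ i, c (b i) ≤ a)).card : ℝ) ≤
      Real.exp (m * θ + a) := by
  have h1 : ∀ b ∈ (Finset.univ : Finset (Fin m → V)).filter (fun b => ∑ i, c (b i) ≤ a),
      (1 : ℝ) ≤ Real.exp a * ∏ i, Real.exp (-c (b i)) := by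
    intro b hb
    rw [Finset.mem_filter] at hb
    rw [← Real.exp_sum, ← Real.exp_add, Finset.sum_neg_distrib]
    exact Real.one_le_exp (by linarith [hb.2])
  calc _ = ∑ b ∈ (Finset.univ : Finset (Fin m → V)).filter (fun b => ∑ i, c (b i) ≤ a), (1 : ℝ) := by
        simp
    _ ≤ ∑ b ∈ (Finset.univ : Finset (Fin m → V)).filter (fun b => ∑ i, c (b i) ≤ a),
          Real.exp a * ∏ i, Real.exp (-c (b i)) := Finset.sum_le_sum h1
    _ ≤ ∑ b : Fin m → V, Real.exp a * ∏ i, Real.exp (-c (b i)) :=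
        Finset.sum_le_sum_of_subset_of_nonneg (Finset.filter_subset _ _)
          (fun _ _ _ => by positivity)
    _ = Real.exp a * (∑ w, Real.exp (-c w)) ^ m := by
        rw [Fintype.sum_pow, Finset.mul_sum]
    _ ≤ Real.exp a * (Real.exp θ) ^ m := by
        gcongr
    _ = _ := by rw [← Real.exp_nat_mul, ← Real.exp_add, add_comm]

lemma count_cover {X : Type u} [PseudoMetricSpace X] (f : X → X) (ε : ℝ) {W : Type u} [Fintype W]
    (l : X → W) (hl : ∀ x y, l x = l y → dist x y < ε) (n : ℕ) (hn : 0 < n)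
    (c : (Fin n → W) → ℝ) (hc0 : ∀ w, 0 ≤ c w) (θ : ℝ) (hθ : 0 ≤ θ)
    (hcs : ∑ w, Real.exp (-c w) ≤ Real.exp θ) (N : ℕ) (s : ℝ) :
    ∃ E : Finset X, (E.card : ℝ) ≤
        (n * (Fintype.card (Fin n → W) * Fintype.card (Fin n → W)) : ℝ) * Real.exp (N * (s + θ)) ∧
      ∀ x, (∑ j ∈ Finset.range N, c (fun i : Fin n => l (f^[(i : ℕ)] (f^[j] x)))) ≤ N * (n * s) →
        ∃ y ∈ E, x ∈ bowenBall f y N ε := by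
  classical
  set m := N / n with hm
  let blk : X → ℕ → (Fin n → W) := fun x j i => l (f^[(i : ℕ)] (f^[j] x))
  let code : X → Fin n → (Fin n × (Fin n → W) × (Fin n → W)) × (Fin m → Fin n → W) :=
    fun x r => ((r, blk x 0, blk x (r + m * n)), fun i => blk x (r + i * n))
  let T : Finset ((Fin n × (Fin n → W) × (Fin n → W)) × (Fin m → Fin n → W)) :=
    Finset.univ ×ˢ (Finset.univ.filter (fun b => ∑ i, c (b i) ≤ N * s))
  let R : X → ((Fin n × (Fin n → W) × (Fin n → W)) × (Fin m → Fin n → W)) → Prop :=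
    fun x t => code x t.1.1 = t
  let ch : {t // t ∈ T ∧ ∃ x, R x t} → X := fun t => t.2.2.choose
  let T' := T.filter (fun t => ∃ x, R x t)
  have hT' : ∀ t ∈ T', t ∈ T ∧ ∃ x, R x t := fun t ht => Finset.mem_filter.1 ht
  refine ⟨T'.attach.image (fun t => ch ⟨t.1, hT' _ t.2⟩), ?_, ?_⟩
  · have h1 : ((T'.attach.image (fun t => ch ⟨t.1, hT' _ t.2⟩)).card : ℝ) ≤ T.card := by
      refine Nat.cast_le.2 (Finset.card_image_le.trans ?_)
      rw [Finset.card_attach]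
      exact Finset.card_filter_le _ _
    refine h1.trans ?_
    have h2 := count_words c θ hcs m (N * s)
    have h3 : Real.exp (m * θ + N * s) ≤ Real.exp (N * (s + θ)) := by
      apply Real.exp_le_exp.2
      have : (m : ℝ) ≤ N := Nat.cast_le.2 (Nat.div_le_self _ _)
      nlinarith
    rw [Finset.card_product, Nat.cast_mul]
    refine mul_le_mul ?_ (h2.trans h3) (Nat.cast_nonneg _) (by positivity)
    simp [Fintype.card_prod]
  · intro x hx
    have hmN : m * n ≤ N := Nat.div_mul_le_self N n
    have hsum : ∑ r ∈ Finset.range n, ∑ i ∈ Finset.range m, c (blk x (r + i * n)) ≤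
        ∑ r ∈ Finset.range n, N * s := by
      rw [sum_blocks (fun j => c (blk x j))]
      refine (Finset.sum_le_sum_of_subset_of_nonneg (Finset.range_mono hmN)
        (fun _ _ _ => hc0 _)).trans (hx.trans (le_of_eq ?_))
      simp; ring
    obtain ⟨r, hr, hrs⟩ := Finset.exists_le_of_sum_le (by simpa using hn.ne') hsum
    rw [Finset.mem_range] at hr
    have ht : code x ⟨r, hr⟩ ∈ T := by
      simp only [T, Finset.mem_product, Finset.mem_univ, true_and, Finset.mem_filter, code]
      rwa [Finset.sum_range] at hrs
    have ht' : code x ⟨r, hr⟩ ∈ T' := Finset.mem_filter.2 ⟨ht, x, rfl⟩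
    refine ⟨ch ⟨_, hT' _ ht'⟩, Finset.mem_image.2 ⟨⟨_, ht'⟩, Finset.mem_attach _ _, rfl⟩, ?_⟩
    have hy : code (ch ⟨_, hT' _ ht'⟩) ⟨r, hr⟩ = code x ⟨r, hr⟩ := (hT' _ ht').2.choose_spec
    generalize ch ⟨_, hT' _ ht'⟩ = y at hy
    simp only [code, Prod.mk.injEq, true_and] at hy
    obtain ⟨⟨h0, hlast⟩, hmid⟩ := hy
    intro j hj
    apply hl
    by_cases hjn : j < n
    · exact congrFun h0 ⟨j, hjn⟩
    · have hk : (j - r) % n < n := Nat.mod_lt _ hn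
      have hdm := Nat.mod_add_div' (j - r) n
      have hjj : (j - r) % n + (r + (j - r) / n * n) = j := by omega
      have key : blk y (r + (j - r) / n * n) = blk x (r + (j - r) / n * n) := by
        have hle : (j - r) / n ≤ m := Nat.div_le_div_right (by omega)
        rcases hle.lt_or_eq with h | h
        · exact congrFun hmid ⟨_, h⟩
        · rw [h]; exact hlast
      have := congrFun key ⟨_, hk⟩
      simp only [blk, ← Function.iterate_add_apply, hjj] at this
      exact this

lemma exists_compacts {X : Type u} [MetricSpace X] [CompactSpace X] [MeasurableSpace X]
    [BorelSpace X] {μ : Measure X} [IsProbabilityMeasure μ] {P : Finset (Set X)}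
    (hP : IsPartition μ P) {τ : ℝ≥0∞} (hτ : τ ≠ 0) :
    ∃ C : P → Set X, (∀ A, IsCompact (C A)) ∧ (∀ A, C A ⊆ (A : Set X)) ∧
      (∀ A B, A ≠ B → Disjoint (C A) (C B)) ∧ μ (⋃ A, C A)ᶜ ≤ τ := by
  classical
  let A' : P → Set X := fun A => (A : Set X) \ ⋃ B ∈ P.erase A, B
  have hA'm : ∀ A, MeasurableSet (A' A) := fun A =>
    (hP.1 _ A.2).diff (Finset.measurableSet_biUnion _ fun B hB => hP.1 _ (Finset.mem_of_mem_erase hB))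
  have hτ' : τ / (P.card + 1 : ℕ) ≠ 0 := ENNReal.div_ne_zero.2 ⟨hτ, by simp⟩
  have h1 : ∀ A, ∃ C ⊆ A' A, IsCompact C ∧ μ (A' A \ C) < τ / (P.card + 1 : ℕ) := fun A =>
    (hA'm A).exists_isCompact_diff_lt (measure_ne_top _ _) hτ'
  choose C hCA hC hCμ using h1
  refine ⟨C, hC, fun A => (hCA A).trans diff_subset, ?_, ?_⟩
  · intro A B hAB
    rw [Set.disjoint_left]
    intro x hx hx'
    have h2 := (hCA A hx).2
    apply h2
    simp only [mem_iUnion]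
    exact ⟨B, Finset.mem_erase.2 ⟨fun h => hAB (Subtype.ext h.symm), B.2⟩, (hCA B hx').1⟩
  · have hsub : (⋃ A, C A)ᶜ ⊆ ((univ \ ⋃ A ∈ P, A) ∪
        ⋃ p : {p : P × P // p.1 ≠ p.2}, ((p.1.1 : Set X) ∩ (p.1.2 : Set X))) ∪
        ⋃ A, (A' A \ C A) := by
      intro x hx
      by_cases h0 : x ∈ ⋃ A ∈ P, A
      · simp only [mem_iUnion] at h0
        obtain ⟨A, hA, hxA⟩ := h0
        by_cases h2 : x ∈ ⋃ B ∈ P.erase A, B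
        · simp only [mem_iUnion] at h2
          obtain ⟨B, hB, hxB⟩ := h2
          refine Or.inl (Or.inr (mem_iUnion.2 ⟨⟨(⟨A, hA⟩, ⟨B, Finset.mem_of_mem_erase hB⟩), ?_⟩, hxA, hxB⟩))
          intro h
          exact (Finset.ne_of_mem_erase hB) (congrArg Subtype.val h).symm
        · refine Or.inr (mem_iUnion.2 ⟨⟨A, hA⟩, ⟨hxA, h2⟩, fun h => hx (mem_iUnion.2 ⟨_, h⟩)⟩)
      · exact Or.inl (Or.inl ⟨mem_univ _, h0⟩)
    refine (measure_mono hsub).trans ((measure_union_le _ _).trans ?_)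
    have e1 : μ ((univ \ ⋃ A ∈ P, A) ∪
        ⋃ p : {p : P × P // p.1 ≠ p.2}, ((p.1.1 : Set X) ∩ (p.1.2 : Set X))) = 0 := by
      rw [measure_union_null_iff]
      refine ⟨hP.2.1, measure_iUnion_null_iff.2 fun p => ?_⟩
      exact hP.2.2 _ p.1.1.2 _ p.1.2.2 fun h => p.2 (Subtype.ext h)
    rw [e1, zero_add]
    refine (measure_iUnion_fintype_le _ _).trans ?_
    refine (Finset.sum_le_sum fun A _ => (hCμ A).le).trans ?_
    rw [Finset.sum_const, nsmul_eq_mul, Finset.card_univ, Fintype.card_coe]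
    calc (P.card : ℝ≥0∞) * (τ / (P.card + 1 : ℕ)) ≤ (P.card + 1 : ℕ) * (τ / (P.card + 1 : ℕ)) := by
          gcongr; simp
      _ ≤ τ := ENNReal.mul_div_le

lemma exists_labels {X : Type u} [MetricSpace X] [CompactSpace X] {ε : ℝ}
    {P : Finset (Set X)} {T : Finset X} (hT : ∀ x, ∃ y ∈ T, dist x y < ε / 3)
    (C : P → Set X) (hC : ∀ A, IsCompact (C A)) (hdiam : ∀ A, Metric.diam (C A) < ε)
    (hdisj : ∀ A B, A ≠ B → Disjoint (C A) (C B)) :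
    ∃ δ > 0, ∃ l : X → P ⊕ T, (∀ x y, l x = l y → dist x y < ε) ∧
      ∀ A x, x ∈ Metric.thickening δ (C A) → l x = Sum.inl A := by
  classical
  have e1 : ∀ A, ∀ᶠ δ : ℝ in 𝓝[>] 0, Metric.diam (C A) + 2 * δ < ε := by
    intro A
    have : Tendsto (fun δ : ℝ => Metric.diam (C A) + 2 * δ) (𝓝[>] 0) (𝓝 (Metric.diam (C A) + 2 * 0)) :=
      ((by fun_prop : Continuous fun δ : ℝ => Metric.diam (C A) + 2 * δ).tendsto 0).mono_left
        nhdsWithin_le_nhds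
    exact this.eventually (gt_mem_nhds (by simpa using hdiam A))
  have e2 : ∀ A B, ∀ᶠ δ : ℝ in 𝓝[>] 0, A ≠ B →
      Disjoint (Metric.thickening δ (C A)) (Metric.thickening δ (C B)) := by
    intro A B
    by_cases h : A = B
    · simp [h]
    · obtain ⟨d, hd, hdd⟩ := (hdisj A B h).exists_thickenings (hC A) (hC B).isClosed
      filter_upwards [Ioo_mem_nhdsGT hd] with δ hδ _
      exact hdd.mono (Metric.thickening_mono hδ.2.le _) (Metric.thickening_mono hδ.2.le _)
  obtain ⟨δ, ⟨h1, h2⟩, hδ⟩ := (((eventually_all.2 e1).and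
    (eventually_all.2 fun A => eventually_all.2 (e2 A))).and self_mem_nhdsWithin).exists
  have hδ : 0 < δ := hδ
  refine ⟨δ, hδ, fun x => if h : ∃ A, x ∈ Metric.thickening δ (C A) then Sum.inl h.choose
    else Sum.inr ⟨(hT x).choose, (hT x).choose_spec.1⟩, ?_, ?_⟩
  · intro x y hxy
    by_cases hx : ∃ A, x ∈ Metric.thickening δ (C A) <;>
    by_cases hy : ∃ A, y ∈ Metric.thickening δ (C A)
    · simp only [hx, hy, dif_pos, Sum.inl.injEq] at hxy
      have hxs := hx.choose_spec
      have hys := hy.choose_spec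
      rw [← hxy] at hys
      have := Metric.dist_le_diam_of_mem ((isCompact_univ (X := X)).isBounded.subset (subset_univ _)) hxs hys
      have h3 := Metric.diam_thickening_le (C hx.choose) hδ.le
      linarith [h1 hx.choose]
    · simp [hx, hy] at hxy
    · simp [hx, hy] at hxy
    · simp only [hx, hy, dif_neg, not_false_eq_true, Sum.inr.injEq, Subtype.mk.injEq] at hxy
      have hxs := (hT x).choose_spec.2
      have hys := (hT y).choose_spec.2
      rw [← hxy] at hys
      have := dist_triangle_right x y (hT x).choose
      have : 0 ≤ dist x y := dist_nonneg
      linarith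
  · intro A x hx
    have h : ∃ A, x ∈ Metric.thickening δ (C A) := ⟨A, hx⟩
    simp only [h, dif_pos, Sum.inl.injEq]
    by_contra hne
    exact Set.disjoint_left.1 (h2 _ _ hne) h.choose_spec hx

lemma exists_majorant {X : Type u} [MetricSpace X] (g : X → ℝ) (M : ℝ)
    (hM : ∀ x, g x ≤ M) (hg0 : ∀ x, 0 ≤ g x) (D : Set X) (δ : ℝ) (hδ : 0 < δ)
    (hD : ∀ x ∈ D, ∀ y, dist x y < δ → g y = g x) :
    ∃ G : X → ℝ, Continuous G ∧ (∀ x, g x ≤ G x) ∧ (∀ x, G x ≤ M) ∧ ∀ x ∈ D, G x = g x := by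
  rcases isEmpty_or_nonempty X with hX | hX
  · exact ⟨g, continuous_of_discreteTopology, fun x => le_rfl, hM, fun x _ => rfl⟩
  have hM0 : 0 ≤ M := (hg0 (Classical.arbitrary X)).trans (hM _)
  let L : ℝ≥0 := ⟨M / δ, by positivity⟩
  have hL : (L : ℝ) = M / δ := rfl
  have hbdd : ∀ x, BddAbove (range fun y => g y - L * dist x y) := by
    intro x
    refine ⟨M, ?_⟩
    rintro _ ⟨y, rfl⟩
    have : 0 ≤ (L : ℝ) * dist x y := by positivity
    simp only
    linarith [hM y]
  have hle : ∀ x, g x ≤ ⨆ y, (g y - L * dist x y) := by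
    intro x
    have := le_ciSup (hbdd x) x
    simpa using this
  refine ⟨fun x => ⨆ y, (g y - L * dist x y), ?_, hle, ?_, ?_⟩
  · refine (LipschitzWith.of_le_add_mul L fun x y => ciSup_le fun z => ?_).continuous
    have h1 := le_ciSup (hbdd y) z
    have h2 : (L : ℝ) * dist y z ≤ L * (dist x y + dist x z) := by
      gcongr
      rw [dist_comm x y]; exact dist_triangle _ _ _
    linarith
  · intro x
    refine ciSup_le fun y => ?_
    have : 0 ≤ (L : ℝ) * dist x y := by positivity
    linarith [hM y]
  · intro x hx
    refine le_antisymm (ciSup_le fun y => ?_) (hle x)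
    by_cases h : dist x y < δ
    · rw [hD x hx y h]
      have : 0 ≤ (L : ℝ) * dist x y := by positivity
      linarith
    · have h1 : (L : ℝ) * δ ≤ L * dist x y := by gcongr; exact not_lt.1 h
      rw [hL] at h1 ⊢
      have h2 : M / δ * δ = M := by field_simp
      linarith [hM y, hg0 x]

lemma key {X : Type u} [MetricSpace X] [CompactSpace X] [MeasurableSpace X]
    [BorelSpace X] {μ : Measure X} [IsProbabilityMeasure μ] {f : X → X} (hfc : Continuous f)
    (hf : MeasurePreserving f μ μ) {P : Finset (Set X)} (hP : IsPartition μ P) {ε : ℝ}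
    (hε : 0 < ε) (hPε : partDiamLt P ε) (n : ℕ) {a : ℝ}
    (ha : partEnt μ (dynJoin f P n) < a) {θ : ℝ} (hθ : 0 < θ) :
    ∃ (W : Type u) (_ : Fintype W) (l : X → W) (c : (Fin n → W) → ℝ) (G : X → ℝ),
      (∀ x y, l x = l y → dist x y < ε) ∧ (∀ w, 0 ≤ c w) ∧
      (∑ w, Real.exp (-c w) ≤ Real.exp θ) ∧ Continuous G ∧
      (∀ x, c (fun i : Fin n => l (f^[(i : ℕ)] x)) ≤ G x) ∧ ∫ x, G x ∂μ < a := by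
  classical
  obtain ⟨t, ht, hcov⟩ := Metric.totallyBounded_iff.1 (isCompact_univ (X := X)).totallyBounded
    (ε / 3) (by linarith)
  lift t to Finset X using ht
  have hT : ∀ x, ∃ y ∈ t, dist x y < ε / 3 := by
    intro x
    have := hcov (mem_univ x)
    simp only [mem_iUnion, Metric.mem_ball] at this
    obtain ⟨y, hy, hxy⟩ := this
    exact ⟨y, hy, hxy⟩
  let W := P ⊕ t
  -- the weights
  let p : (Fin n → P) → ℝ := fun v => (μ (cyl f P n v)).toReal
  have hp0 : ∀ v, 0 ≤ p v := fun v => ENNReal.toReal_nonneg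
  have hp1 : ∀ v, p v ≤ 1 := fun v =>
    ENNReal.toReal_le_of_le_ofReal zero_le_one (by simpa using prob_le_one)
  let p' : (Fin n → W) → ℝ := Function.extend (fun (v : Fin n → P) (i : Fin n) => (Sum.inl (v i) : W)) p 0
  have hinj : Function.Injective (fun (v : Fin n → P) (i : Fin n) => (Sum.inl (v i) : W)) := by
    intro v v' h
    funext i
    exact Sum.inl_injective (congrFun h i)
  have hp' : ∀ v : Fin n → P, p' (fun i => Sum.inl (v i)) = p v := fun v => hinj.extend_apply p 0 v
  have hp'0 : ∀ w, 0 ≤ p' w ∧ p' w ≤ 1 := by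
    intro w
    by_cases h : ∃ v : Fin n → P, (fun i => (Sum.inl (v i) : W)) = w
    · obtain ⟨v, rfl⟩ := h
      rw [hp']; exact ⟨hp0 v, hp1 v⟩
    · simp [p', Function.extend_apply' _ _ _ h]
  have hp's : ∑ w, p' w ≤ 1 := by
    have h1 : ∑ w, p' w = ∑ v, p v := by
      symm
      refine Finset.sum_of_injOn (fun (v : Fin n → P) (i : Fin n) => (Sum.inl (v i) : W))
        hinj.injOn (by simp) ?_ (fun v _ => (hp' v).symm)
      intro w _ hw
      have h : ¬ ∃ v : Fin n → P, (fun i => (Sum.inl (v i) : W)) = w := by simpa using hw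
      simp [p', Function.extend_apply' _ _ _ h]
    rw [h1]; exact sum_cyl_le_one hf hP n
  obtain ⟨η, hη0, hη1, hηs⟩ : ∃ η : ℝ, 0 < η ∧ η ≤ 1 ∧ Fintype.card (Fin n → W) * η ≤ θ := by
    refine ⟨min 1 (θ / (Fintype.card (Fin n → W) + 1)), by positivity, min_le_left _ _, ?_⟩
    have : (Fintype.card (Fin n → W) : ℝ) * min 1 (θ / (Fintype.card (Fin n → W) + 1)) ≤
      (Fintype.card (Fin n → W) + 1 : ℝ) * (θ / (Fintype.card (Fin n → W) + 1)) := by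
      gcongr
      · linarith
      · exact min_le_right _ _
    refine this.trans (le_of_eq ?_)
    field_simp
  let c : (Fin n → W) → ℝ := fun w => -Real.log (max (p' w) η)
  have hmax : ∀ w, 0 < max (p' w) η := fun w => lt_max_of_lt_right hη0
  set M := -Real.log η with hMdef
  have hM0 : 0 ≤ M := by
    have := Real.log_nonpos hη0.le hη1; linarith
  have hc0 : ∀ w, 0 ≤ c w := fun w => by
    have := Real.log_nonpos (hmax w).le (max_le (hp'0 w).2 hη1)
    simp only [c]; linarith
  have hcM : ∀ w, c w ≤ M := fun w => by
    have := Real.log_le_log hη0 (le_max_right (p' w) η)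
    simp only [c, hMdef]; linarith
  have hcs : ∑ w, Real.exp (-c w) ≤ Real.exp θ := by
    calc ∑ w, Real.exp (-c w) = ∑ w, max (p' w) η := by
          refine Finset.sum_congr rfl fun w _ => ?_
          simp only [c, neg_neg]
          exact Real.exp_log (hmax w)
      _ ≤ ∑ w, (p' w + η) := Finset.sum_le_sum fun w _ =>
          max_le (by linarith) (by linarith [(hp'0 w).1])
      _ = ∑ w, p' w + Fintype.card (Fin n → W) * η := by
          rw [Finset.sum_add_distrib]; simp
      _ ≤ θ + 1 := by linarith
      _ ≤ Real.exp θ := Real.add_one_le_exp θ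
  -- the compact sets
  obtain ⟨τ, hτ0, hτ⟩ : ∃ τ : ℝ, 0 < τ ∧ partEnt μ (dynJoin f P n) + M * (n * τ) < a := by
    have hpos : 0 < a - partEnt μ (dynJoin f P n) := by linarith
    have hden : 0 < M * n + 1 := by positivity
    refine ⟨(a - partEnt μ (dynJoin f P n)) / (M * n + 1), by positivity, ?_⟩
    have : (M * n + 1) * ((a - partEnt μ (dynJoin f P n)) / (M * n + 1)) =
      a - partEnt μ (dynJoin f P n) := by field_simp
    have h2 : 0 < (a - partEnt μ (dynJoin f P n)) / (M * n + 1) := by positivity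
    nlinarith
  obtain ⟨C, hC, hCA, hCd, hCμ⟩ := exists_compacts hP (τ := ENNReal.ofReal τ) (by simpa using hτ0)
  have hbd : ∀ s : Set X, Bornology.IsBounded s := fun s =>
    (isCompact_univ (X := X)).isBounded.subset (subset_univ _)
  obtain ⟨δ, hδ, l, hl, hlC⟩ := exists_labels hT C hC
    (fun A => (Metric.diam_mono (hCA A) (hbd _)).trans_lt (hPε _ A.2)) hCd
  let D : Set X := {x | ∀ j : Fin n, f^[(j : ℕ)] x ∈ ⋃ A, C A}
  let g : X → ℝ := fun x => c (fun i : Fin n => l (f^[(i : ℕ)] x))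
  obtain ⟨δ', hδ', hunif⟩ : ∃ δ' > 0, ∀ (j : Fin n) (x y : X), dist x y < δ' →
      dist (f^[(j : ℕ)] x) (f^[(j : ℕ)] y) < δ := by
    have h1 : ∀ j : Fin n, ∀ᶠ d : ℝ in 𝓝[>] 0, ∀ x y : X, dist x y < d →
        dist (f^[(j : ℕ)] x) (f^[(j : ℕ)] y) < δ := by
      intro j
      have := CompactSpace.uniformContinuous_of_continuous (hfc.iterate (j : ℕ))
      obtain ⟨d, hd, h⟩ := Metric.uniformContinuous_iff.1 this δ hδ
      filter_upwards [Ioo_mem_nhdsGT hd] with d' hd' x y hxy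
      exact h (hxy.trans hd'.2)
    obtain ⟨d, h, hd⟩ := ((eventually_all.2 h1).and self_mem_nhdsWithin).exists
    exact ⟨d, hd, h⟩
  have hDlab : ∀ x ∈ D, ∃ v : Fin n → P, ∀ j, f^[(j : ℕ)] x ∈ C (v j) := by
    intro x hx
    have : ∀ j : Fin n, ∃ A, f^[(j : ℕ)] x ∈ C A := fun j => mem_iUnion.1 (hx j)
    choose v hv using this
    exact ⟨v, hv⟩
  have hDnear : ∀ x (v : Fin n → P), (∀ j : Fin n, f^[(j : ℕ)] x ∈ C (v j)) → ∀ y, dist x y < δ' →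
      (fun i : Fin n => l (f^[(i : ℕ)] y)) = fun i => Sum.inl (v i) := by
    intro x v hv y hy
    funext j
    apply hlC
    rw [Metric.mem_thickening_iff]
    exact ⟨_, hv j, by rw [dist_comm]; exact hunif j x y hy⟩
  obtain ⟨G, hGc, hgG, hGM, hGD⟩ := exists_majorant g M (fun x => hcM _) (fun x => hc0 _) D δ' hδ' (by
    intro x hx y hxy
    obtain ⟨v, hv⟩ := hDlab x hx
    simp only [g]
    rw [hDnear x v hv y hxy, hDnear x v hv x (by simpa using hδ')])
  refine ⟨W, inferInstance, l, c, G, hl, hc0, hcs, hGc, hgG, ?_⟩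
  -- the integral estimate
  have hDm : MeasurableSet D := by
    have : D = ⋂ j : Fin n, f^[(j : ℕ)] ⁻¹' (⋃ A, C A) := by ext x; simp [D]
    rw [this]
    exact MeasurableSet.iInter fun j => (hfc.iterate _).measurable
      (MeasurableSet.iUnion fun A => (hC A).measurableSet)
  have hDμ : (μ Dᶜ).toReal ≤ n * τ := by
    have hsub : Dᶜ ⊆ ⋃ j : Fin n, f^[(j : ℕ)] ⁻¹' (⋃ A, C A)ᶜ := by
      intro x hx
      simp only [D, mem_compl_iff, mem_ofPred_eq, not_forall] at hx
      obtain ⟨j, hj⟩ := hx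
      exact mem_iUnion.2 ⟨j, hj⟩
    have h1 : μ Dᶜ ≤ n * ENNReal.ofReal τ := by
      refine (measure_mono hsub).trans ((measure_iUnion_fintype_le _ _).trans ?_)
      have : ∀ j ∈ (Finset.univ : Finset (Fin n)), μ (f^[(j : ℕ)] ⁻¹' (⋃ A, C A)ᶜ) ≤ ENNReal.ofReal τ := by
        intro j _
        rw [(hf.iterate j).measure_preimage
          (MeasurableSet.iUnion fun A => (hC A).measurableSet).compl.nullMeasurableSet]
        exact hCμ
      refine (Finset.sum_le_sum this).trans ?_
      simp
    refine (ENNReal.toReal_mono (by finiteness) h1).trans ?_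
    rw [ENNReal.toReal_mul, ENNReal.toReal_ofReal hτ0.le]
    simp
  have hcylm := cyl_measurable hf.measurable hP n
  have hbound : ∀ x, G x ≤ ∑ v : Fin n → P, (cyl f P n v).indicator (fun _ => c (fun i => Sum.inl (v i))) x
      + Dᶜ.indicator (fun _ => M) x := by
    intro x
    have hnn : ∀ v : Fin n → P, 0 ≤ (cyl f P n v).indicator (fun _ => c (fun i => Sum.inl (v i))) x :=
      fun v => indicator_nonneg (fun _ _ => hc0 _) _
    by_cases hx : x ∈ D
    · obtain ⟨v, hv⟩ := hDlab x hx
      have hxv : x ∈ cyl f P n v := fun j => hCA _ (hv j)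
      have h2 := Finset.single_le_sum (f := fun v : Fin n → P =>
        (cyl f P n v).indicator (fun _ => c (fun i => Sum.inl (v i))) x) (fun v _ => hnn v) (Finset.mem_univ v)
      have h3 : G x = c (fun i => Sum.inl (v i)) := by
        rw [hGD x hx]
        simp only [g]
        rw [hDnear x v hv x (by simpa using hδ')]
      rw [h3]
      simp only [indicator_of_mem hxv] at h2
      have h4 : 0 ≤ Dᶜ.indicator (fun _ => M) x := indicator_nonneg (fun _ _ => hM0) _
      linarith
    · rw [indicator_of_mem (show x ∈ Dᶜ from hx)]
      have := Finset.sum_nonneg (s := (Finset.univ : Finset (Fin n → P))) (fun v _ => hnn v)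
      linarith [hGM x]
  have hint1 : ∀ v : Fin n → P, Integrable ((cyl f P n v).indicator (fun _ => c (fun i => Sum.inl (v i)))) μ :=
    fun v => (integrable_const _).indicator (hcylm v)
  have hint2 : Integrable (Dᶜ.indicator (fun _ => M)) μ := (integrable_const _).indicator hDm.compl
  have hintG : Integrable G μ := by
    exact hGc.integrable_of_hasCompactSupport (HasCompactSupport.of_compactSpace G)
  have hI := integral_mono hintG ((integrable_finsetSum _ fun v _ => hint1 v).add hint2) hbound
  refine lt_of_le_of_lt ?_ hτ
  refine hI.trans ?_
  have hI2 : ∫ x, (∑ v : Fin n → P, (cyl f P n v).indicator (fun _ => c (fun i => Sum.inl (v i))) x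
      + Dᶜ.indicator (fun _ => M) x) ∂μ =
      ∑ v : Fin n → P, p v * c (fun i => Sum.inl (v i)) + (μ Dᶜ).toReal * M := by
    rw [integral_add (integrable_finsetSum _ fun v _ => hint1 v) hint2,
      integral_finsetSum _ (fun v _ => hint1 v)]
    congr 1
    · refine Finset.sum_congr rfl fun v _ => ?_
      rw [integral_indicator_const _ (hcylm v)]; rfl
    · rw [integral_indicator_const _ hDm.compl]; rfl
  refine le_trans (le_of_eq hI2) ?_
  rw [partEnt_dynJoin hf hP]
  refine add_le_add (Finset.sum_le_sum fun v _ => ?_) ?_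
  · rcases (hp0 v).eq_or_lt with h | h
    · rw [← h]; change _ ≤ Real.negMulLog (p v); rw [← h]; simp
    · change _ ≤ Real.negMulLog (p v)
      have h5 : Real.log (p v) ≤ Real.log (max (p' fun i => Sum.inl (v i)) η) := by
        apply Real.log_le_log h
        rw [hp']; exact le_max_left _ _
      simp only [c, Real.negMulLog]
      nlinarith
  · rw [mul_comm]; gcongr

lemma integral_emp {X : Type u} [MetricSpace X] [CompactSpace X] [MeasurableSpace X]
    [BorelSpace X] (f : X → X) (x : X) (N : ℕ) (hN : 0 < N) (G : X → ℝ) :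
    (N : ℝ) * ∫ y, G y ∂(empProb f x N : Measure X) = ∑ j ∈ Finset.range N, G (f^[j] x) := by
  have h1 : max N 1 = N := max_eq_left hN
  have h2 : ((empProb f x N : ProbabilityMeasure X) : Measure X) =
      (N : ℝ≥0∞)⁻¹ • ∑ j ∈ Finset.range N, Measure.dirac (f^[j] x) := by
    change empMeasure f x N = _
    rw [empMeasure, h1]
  rw [h2, integral_smul_measure, integral_finsetSum_measure]
  · have : (N : ℝ) ≠ 0 := by positivity
    simp [this]
  · intro j _
    exact integrable_dirac (by simp)

lemma local_cover {X : Type u} [MetricSpace X] [CompactSpace X] [MeasurableSpace X]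
    [BorelSpace X] {f : X → X} (hfc : Continuous f) (μ : ProbabilityMeasure X)
    (hμ : InvariantProb f μ) {ε : ℝ} (hε : 0 < ε) {s θ : ℝ}
    (hs : infEnt (μ : Measure X) f ε < s) (hθ : 0 < θ) :
    ∃ (F : Set (ProbabilityMeasure X)) (B : ℝ), IsOpen F ∧ μ ∈ F ∧ 0 ≤ B ∧
      ∀ N : ℕ, 0 < N → ∃ E : Finset X, (E.card : ℝ) ≤ B * Real.exp (N * (s + θ)) ∧
        ∀ x, empProb f x N ∈ F → ∃ y ∈ E, x ∈ bowenBall f y N ε := by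
  have hf : MeasurePreserving f (μ : Measure X) (μ : Measure X) := ⟨hfc.measurable, hμ⟩
  obtain ⟨P0, hP0, hP0μ⟩ := exists_partition (X := X) hε
  obtain ⟨_, ⟨P, ⟨hP, hPε⟩, rfl⟩, hPs⟩ := exists_lt_of_csInf_lt
    (⟨_, P0, ⟨hP0μ _, hP0⟩, rfl⟩ : (dynEnt (μ : Measure X) f ''
      {P : Finset (Set X) | IsPartition (μ : Measure X) P ∧ partDiamLt P ε}).Nonempty) hs
  obtain ⟨n, hn, hns⟩ := exists_partEnt_lt hf hP hPs
  obtain ⟨W, hW, l, c, G, hl, hc0, hcs, hGc, hcG, hGi⟩ := key hfc hf hP hε hPε n hns hθ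
  let Gb : BoundedContinuousFunction X ℝ := BoundedContinuousFunction.mkOfCompact ⟨G, hGc⟩
  refine ⟨{ν | ∫ x, Gb x ∂(ν : Measure X) < n * s},
    (n * (Fintype.card (Fin n → W) * Fintype.card (Fin n → W)) : ℝ), ?_, hGi, by positivity, ?_⟩
  · refine isOpen_lt ?_ continuous_const
    exact (FiniteMeasure.continuous_integral_boundedContinuousFunction Gb).comp
      ProbabilityMeasure.toFiniteMeasure_continuous
  · intro N hN
    obtain ⟨E, hE, hcov⟩ := count_cover f ε l hl n hn c hc0 θ hθ.le hcs N s
    refine ⟨E, hE, fun x hx => hcov x ?_⟩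
    have hx' : ∫ y, G y ∂(empProb f x N : Measure X) < n * s := hx
    calc _ ≤ ∑ j ∈ Finset.range N, G (f^[j] x) := Finset.sum_le_sum fun j _ => hcG _
      _ = N * ∫ y, G y ∂(empProb f x N : Measure X) := (integral_emp f x N hN G).symm
      _ ≤ _ := by gcongr

lemma infEnt_nonneg {X : Type u} [MetricSpace X] [MeasurableSpace X]
    [BorelSpace X] {f : X → X} (hfc : Continuous f) (μ : ProbabilityMeasure X)
    (hμ : InvariantProb f μ) (ε : ℝ) : 0 ≤ infEnt (μ : Measure X) f ε := by
  have hf : MeasurePreserving f (μ : Measure X) (μ : Measure X) := ⟨hfc.measurable, hμ⟩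
  refine Real.sInf_nonneg ?_
  rintro _ ⟨P, ⟨hP, _⟩, rfl⟩
  exact dynEnt_nonneg hf hP

lemma infEnt_bdd {X : Type u} [MetricSpace X] [CompactSpace X] [MeasurableSpace X]
    [BorelSpace X] {f : X → X} (hfc : Continuous f) {K : Set (ProbabilityMeasure X)}
    (hK : K ⊆ invSet f) {ε : ℝ} (hε : 0 < ε) :
    BddAbove ((fun ν : ProbabilityMeasure X => infEnt (ν : Measure X) f ε) '' K) := by
  obtain ⟨P0, hP0, hP0μ⟩ := exists_partition (X := X) hε
  refine ⟨Real.log (P0.card + 1) + 1, ?_⟩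
  rintro _ ⟨μ, hμ, rfl⟩
  have hf : MeasurePreserving f (μ : Measure X) (μ : Measure X) := ⟨hfc.measurable, hK hμ⟩
  refine le_trans (csInf_le ⟨0, ?_⟩ ⟨P0, ⟨hP0μ _, hP0⟩, rfl⟩) (dynEnt_le hf (hP0μ _))
  rintro _ ⟨P, ⟨hP, _⟩, rfl⟩
  exact dynEnt_nonneg hf hP

lemma coverSum_le {X : Type u} (E : ℕ → Finset X) (s r B : ℝ) (hB : 0 ≤ B) (hsr : r < s) (N₀ : ℕ)
    (hE : ∀ N, N₀ ≤ N → ((E N).card : ℝ) ≤ B * Real.exp (N * r)) :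
    coverSum s {p : X × ℕ | N₀ ≤ p.2 ∧ p.1 ∈ E p.2} ≤
      ENNReal.ofReal B * (ENNReal.ofReal (Real.exp (-(s - r))) ^ N₀ *
        (1 - ENNReal.ofReal (Real.exp (-(s - r))))⁻¹) := by
  set C : Set (X × ℕ) := {p : X × ℕ | N₀ ≤ p.2 ∧ p.1 ∈ E p.2}
  let φ : (Σ k : ℕ, E (N₀ + k)) → C := fun q => ⟨(q.2.1, N₀ + q.1), by simp, q.2.2⟩
  have hφ : Function.Surjective φ := by
    rintro ⟨⟨x, N⟩, hN, hx⟩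
    obtain ⟨k, rfl⟩ := Nat.exists_eq_add_of_le hN
    exact ⟨⟨k, ⟨x, hx⟩⟩, rfl⟩
  unfold coverSum
  refine (ENNReal.tsum_le_tsum_comp_of_surjective hφ _).trans ?_
  rw [ENNReal.tsum_sigma']
  have hterm : ∀ k : ℕ, (∑' b : E (N₀ + k), ENNReal.ofReal (Real.exp (-s * (((φ ⟨k, b⟩ : C) : X × ℕ).2 : ℝ))))
      ≤ ENNReal.ofReal B * (ENNReal.ofReal (Real.exp (-(s - r))) ^ N₀ *
        ENNReal.ofReal (Real.exp (-(s - r))) ^ k) := by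
    intro k
    have h1 := hE (N₀ + k) (by simp)
    simp only [φ]
    rw [tsum_fintype, Finset.sum_const, nsmul_eq_mul, Finset.card_univ, Fintype.card_coe,
      ← pow_add, ← ENNReal.ofReal_pow (Real.exp_pos _).le, ← ENNReal.ofReal_mul hB,
      ← ENNReal.ofReal_natCast, ← ENNReal.ofReal_mul (Nat.cast_nonneg _)]
    apply ENNReal.ofReal_le_ofReal
    rw [← Real.exp_nat_mul]
    calc ((E (N₀ + k)).card : ℝ) * Real.exp (-s * ((N₀ + k : ℕ) : ℝ))
        ≤ (B * Real.exp (((N₀ + k : ℕ) : ℝ) * r)) * Real.exp (-s * ((N₀ + k : ℕ) : ℝ)) := by gcongr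
      _ = B * Real.exp (((N₀ + k : ℕ) : ℝ) * -(s - r)) := by
          rw [mul_assoc, ← Real.exp_add]; congr 2; ring
  refine (ENNReal.tsum_le_tsum hterm).trans ?_
  rw [ENNReal.tsum_mul_left, ENNReal.tsum_mul_left, ENNReal.tsum_geometric]

end MMDProof

open MMDProof

theorem stmt12 {X : Type*} [MetricSpace X] [CompactSpace X] [Nonempty X]
    [MeasurableSpace X] [BorelSpace X]
    (f : X → X) (hf : Continuous f)
    (K : Set (ProbabilityMeasure X)) (hKclosed : IsClosed K) (hKsub : K ⊆ invSet f)
    (ε : ℝ) (hε : 0 < ε) :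
    hB f {x : X | (Vf f x ∩ K).Nonempty} ε ≤
      sSup ((fun ν : ProbabilityMeasure X => infEnt (ν : Measure X) f ε) '' K) := by
  classical
  set S := sSup ((fun ν : ProbabilityMeasure X => infEnt (ν : Measure X) f ε) '' K) with hS
  have hS0 : 0 ≤ S := by
    apply Real.sSup_nonneg
    rintro _ ⟨μ, hμ, rfl⟩
    exact infEnt_nonneg hf μ (hKsub hμ) ε
  by_cases hbdd : BddBelow {s : ℝ | mBLim f {x : X | (Vf f x ∩ K).Nonempty} s ε = 0}
  swap
  · rw [hB, Real.sInf_of_not_bddBelow hbdd]; exact hS0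
  refine le_of_forall_gt_imp_ge_of_dense fun s hs => csInf_le hbdd ?_
  -- main claim
  set θ := (s - S) / 3 with hθ
  have hθ0 : 0 < θ := by simp only [hθ]; linarith
  have hloc : ∀ μ ∈ K, ∃ (F : Set (ProbabilityMeasure X)) (B : ℝ), IsOpen F ∧ μ ∈ F ∧ 0 ≤ B ∧
      ∀ N : ℕ, 0 < N → ∃ E : Finset X, (E.card : ℝ) ≤ B * Real.exp (N * ((S + θ) + θ)) ∧
        ∀ x, empProb f x N ∈ F → ∃ y ∈ E, x ∈ bowenBall f y N ε := fun μ hμ =>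
    local_cover hf μ (hKsub hμ) hε
      (lt_of_le_of_lt (le_csSup (infEnt_bdd hf hKsub hε) ⟨μ, hμ, rfl⟩) (by linarith)) hθ0
  choose! F B hFo hFμ hB0 hFE using hloc
  obtain ⟨t, htc⟩ := hKclosed.isCompact.elim_nhds_subcover' (fun μ _ => F μ)
    (fun μ hμ => (hFo μ hμ).mem_nhds (hFμ μ hμ))
  choose! E hEc hE using hFE
  let E' : ℕ → Finset X := fun N => t.biUnion fun μ => E μ N
  set B' : ℝ := ∑ μ ∈ t, B μ with hB'
  have hB'0 : 0 ≤ B' := Finset.sum_nonneg fun μ _ => hB0 μ μ.2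
  have hE'c : ∀ N, 0 < N → ((E' N).card : ℝ) ≤ B' * Real.exp (N * ((S + θ) + θ)) := by
    intro N hN
    calc ((E' N).card : ℝ) ≤ ∑ μ ∈ t, ((E μ N).card : ℝ) := by
          exact_mod_cast Finset.card_biUnion_le
      _ ≤ ∑ μ ∈ t, B μ * Real.exp (N * ((S + θ) + θ)) :=
          Finset.sum_le_sum fun μ _ => hEc μ μ.2 N hN
      _ = _ := by rw [Finset.sum_mul]
  have hr : (S + θ) + θ < s := by simp only [hθ]; linarith
  set ρ := ENNReal.ofReal (Real.exp (-(s - ((S + θ) + θ)))) with hρ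
  have hρ1 : ρ < 1 := by
    rw [hρ, ENNReal.ofReal_lt_one, Real.exp_lt_one_iff]; linarith
  have hmB : ∀ N N₀ : ℕ, N ≤ N₀ → 0 < N₀ → mB f {x : X | (Vf f x ∩ K).Nonempty} s N ε ≤
      ENNReal.ofReal B' * (ρ ^ N₀ * (1 - ρ)⁻¹) := by
    intro N N₀ hNN hN₀
    refine le_trans ?_ (coverSum_le E' s _ B' hB'0 hr N₀ fun M hM => hE'c M (by omega))
    refine iInf_le_of_le _ (iInf_le_of_le ?_ (iInf_le_of_le ?_ (iInf_le_of_le ?_ le_rfl)))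
    · have : {p : X × ℕ | N₀ ≤ p.2 ∧ p.1 ∈ E' p.2} ⊆ ⋃ M : ℕ, (fun x => (x, M)) '' (E' M : Set X) := by
        rintro ⟨x, M⟩ ⟨_, hx⟩
        exact mem_iUnion.2 ⟨M, x, hx, rfl⟩
      exact (countable_iUnion fun M => ((E' M).countable_toSet.image _)).mono this
    · rintro ⟨x, M⟩ ⟨h, _⟩
      exact hNN.trans h
    · rintro x ⟨ν, hν, hνK⟩
      obtain ⟨μ, hμt, hνμ⟩ := mem_iUnion₂.1 (htc hνK)
      have hfreq : ∃ᶠ M in atTop, empProb f x M ∈ F μ :=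
        MapClusterPt.frequently hν ((hFo μ μ.2).mem_nhds hνμ)
      obtain ⟨M, hM, hMN⟩ := (hfreq.and_eventually (eventually_ge_atTop N₀)).exists
      obtain ⟨y, hy, hxy⟩ := hE μ μ.2 M (by omega) x hM
      exact mem_iUnion₂.2 ⟨(y, M), ⟨hMN, Finset.mem_biUnion.2 ⟨μ, hμt, hy⟩⟩, hxy⟩
  have hlim : Tendsto (fun N₀ : ℕ => ENNReal.ofReal B' * (ρ ^ N₀ * (1 - ρ)⁻¹)) atTop (𝓝 0) := by
    have h1 := ENNReal.tendsto_pow_atTop_nhds_zero_of_lt_one hρ1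
    have hfin : (1 - ρ)⁻¹ ≠ ∞ := by
      rw [ENNReal.inv_ne_top]; exact (tsub_pos_of_lt hρ1).ne'
    have h2 := ENNReal.Tendsto.mul_const h1 (Or.inr hfin)
    have h3 := ENNReal.Tendsto.const_mul (a := ENNReal.ofReal B') h2 (Or.inr ENNReal.ofReal_ne_top)
    simpa using h3
  change mBLim f _ s ε = 0
  rw [mBLim, ← nonpos_iff_eq_zero]
  refine iSup_le fun N => ge_of_tendsto hlim ?_
  filter_upwards [eventually_ge_atTop N, eventually_gt_atTop 0] with N₀ h1 h2
  exact hmB N N₀ h1 h2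

end
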